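/- arXiv:math/0411575 — 2 statements merged into one kernel-verified Lean document; each statement's English description precedes it below -/
import Mathlib

section
/- Let (W,S) be a right-angled Coxeter system (all off-diagonal Coxeter matrix entries are 2 or ∞). The map sending the singleton {s} to the image of s in the abelianization W^ab extends to an 𝔽₂-linear isomorphism π_S from the space [S] of finite subsets of S (under symmetric difference) onto W^ab; moreover π_S maps the set of finite commutative subsets of S onto the image in W^ab of the set of elements of finite order of W. -/
/-!
The letter parity homomorphism `W → [S]` is well defined because all off-diagonal exponents are
even, and it inverts `π` after passing to abelianizations. A product of distinct commuting
generators has finite order, which gives one inclusion between the two images. For the other, if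
`m_{s,t} = ∞`, send `s` and `t` to the standard reflections of the infinite dihedral group and all
other generators to `1`. An element of `W` in which `s` and `t` both occur an odd number of times
then goes to a nontrivial rotation, so it has infinite order.
-/

section FinsuppZMod

variable {ι A : Type*} {n : ℕ}

theorem addMonoidHom_finsupp_zmod_ext [AddGroup A] {f g : (ι →₀ ZMod n) →+ A}
    (h : ∀ i, f (Finsupp.single i 1) = g (Finsupp.single i 1)) : f = g := by
  refine Finsupp.addHom_ext fun i y ↦ ?_
  obtain ⟨k, rfl⟩ := ZMod.intCast_surjective y
  rw [← zsmul_one, ← Finsupp.smul_single, map_zsmul, map_zsmul, h]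

/-- The homomorphism from the free `ZMod n`-module on `ι` to an abelian group determined by a
family of elements killed by `n`. -/
noncomputable def finsuppZModLift [AddCommGroup A] (a : ι → A) (ha : ∀ i, n • a i = 0) :
    (ι →₀ ZMod n) →+ A :=
  Finsupp.liftAddHom fun i ↦ ZMod.lift n ⟨zmultiplesHom A (a i), by simpa using ha i⟩

theorem finsuppZModLift_single_one [AddCommGroup A] (a : ι → A) (ha : ∀ i, n • a i = 0) (i : ι) :
    finsuppZModLift a ha (Finsupp.single i 1) = a i := by
  rw [finsuppZModLift, Finsupp.liftAddHom_apply_single, ← Int.cast_one, ZMod.lift_coe]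
  simp

theorem sum_support_single_one (v : ι →₀ ZMod 2) :
    ∑ i ∈ v.support, Finsupp.single i (1 : ZMod 2) = v := by
  conv_rhs => rw [← v.sum_single]
  refine Finset.sum_congr rfl fun i hi ↦ ?_
  have hvi : v i = 1 := Fin.eq_one_of_ne_zero _ (Finsupp.mem_support_iff.mp hi)
  rw [hvi]

end FinsuppZMod

theorem isOfFinOrder_noncommProd {ι G : Type*} [Monoid G] (s : Finset ι) (f : ι → G)
    (comm : (s : Set ι).Pairwise (Function.onFun Commute f)) (hf : ∀ i ∈ s, IsOfFinOrder (f i)) :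
    IsOfFinOrder (s.noncommProd f comm) := by
  induction s using Finset.cons_induction with
  | empty => simp
  | cons a s ha ih =>
    rw [Finset.noncommProd_cons]
    refine Commute.isOfFinOrder_mul ?_ (hf a (s.mem_cons_self a))
      (ih _ fun i hi ↦ hf i (Finset.mem_cons_of_mem hi))
    refine Finset.noncommProd_commute _ _ _ _ fun i hi ↦ ?_
    exact comm (s.mem_cons_self a) (Finset.mem_cons_of_mem hi) (ne_of_mem_of_not_mem hi ha).symm

section Dihedral

open DihedralGroup Multiplicative

theorem isOfFinOrder_r_iff {i : ZMod 0} : IsOfFinOrder (r i) ↔ i = 0 := by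
  refine ⟨fun h ↦ ?_, by rintro rfl; simp⟩
  obtain ⟨k, hk, hpow⟩ := isOfFinOrder_iff_pow_eq_one.mp h
  rw [r_pow, one_def, r.injEq] at hpow
  exact (mul_eq_zero.mp hpow).resolve_right (Nat.cast_ne_zero.mpr hk.ne')

/-- For even `n`, the homomorphism from the dihedral group of order `2n` to `ZMod 2 × ZMod 2`
counting modulo `2` how often each of the generating reflections `sr 0` and `sr 1` occurs. -/
def dihedralParity {n : ℕ} (hn : 2 ∣ n) : DihedralGroup n →* Multiplicative (ZMod 2 × ZMod 2) where
  toFun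
    | r i => ofAdd (ZMod.castHom hn (ZMod 2) i, ZMod.castHom hn (ZMod 2) i)
    | sr i => ofAdd (ZMod.castHom hn (ZMod 2) i + 1, ZMod.castHom hn (ZMod 2) i)
  map_one' := by rw [one_def]; simp only [map_zero]; rfl
  map_mul' := by
    rintro (i | i) (j | j) <;>
      simp only [r_mul_r, r_mul_sr, sr_mul_r, sr_mul_sr, map_add, map_sub, ← ofAdd_add,
        Prod.mk_add_mk] <;>
      generalize ZMod.castHom hn (ZMod 2) i = a <;>
      generalize ZMod.castHom hn (ZMod 2) j = b <;>
      decide +revert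

theorem dihedralParity_r {n : ℕ} (hn : 2 ∣ n) (i : ZMod n) :
    dihedralParity hn (r i) =
      ofAdd (ZMod.castHom hn (ZMod 2) i, ZMod.castHom hn (ZMod 2) i) := rfl

theorem dihedralParity_sr {n : ℕ} (hn : 2 ∣ n) (i : ZMod n) :
    dihedralParity hn (sr i) =
      ofAdd (ZMod.castHom hn (ZMod 2) i + 1, ZMod.castHom hn (ZMod 2) i) := rfl

theorem dihedralParity_ne_of_isOfFinOrder {g : DihedralGroup 0} (hg : IsOfFinOrder g) :
    dihedralParity (dvd_zero 2) g ≠ ofAdd (1, 1) := by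
  rcases g with i | i
  · simp [isOfFinOrder_r_iff.mp hg, dihedralParity_r, -r_zero]
  · rw [dihedralParity_sr]
    generalize ZMod.castHom (dvd_zero 2) (ZMod 2) i = a
    decide +revert

end Dihedral

/-- A Coxeter matrix is even if its off-diagonal entries are even; the entry `0`, which encodes
`∞`, is allowed. -/
def IsEvenCoxeterMatrix {B : Type*} (M : CoxeterMatrix B) : Prop :=
  Pairwise fun s t ↦ Even (M s t)

namespace IsEvenCoxeterMatrix

open Multiplicative

variable {B W : Type*} [Group W] {M : CoxeterMatrix B}

theorem isLiftable (hM : IsEvenCoxeterMatrix M) {G : Type*} [Monoid G] {f : B → G}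
    (hsq : ∀ i, f i ^ 2 = 1) (hcomm : ∀ i j, M i j ≠ 0 → Commute (f i) (f j)) :
    M.IsLiftable f := by
  intro i j
  by_cases hij : i = j
  · rw [hij, M.diagonal, pow_one, ← pow_two, hsq]
  by_cases h0 : M i j = 0
  · rw [h0, pow_zero]
  obtain ⟨k, hk⟩ := (hM hij).two_dvd
  rw [hk, pow_mul, (hcomm i j h0).mul_pow, hsq, hsq, mul_one, one_pow]

/-- The homomorphism sending `w` to the set of generators that occur an odd number of times in a
word for `w`, a finite subset of `B` being encoded by its indicator function `B →₀ ZMod 2`. -/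
noncomputable def letterParity (hM : IsEvenCoxeterMatrix M) (cs : CoxeterSystem M W) :
    W →* Multiplicative (B →₀ ZMod 2) :=
  cs.lift ⟨fun i ↦ ofAdd (Finsupp.single i 1),
    hM.isLiftable (fun i ↦ by rw [← ofAdd_nsmul, ZModModule.char_nsmul_eq_zero, ofAdd_zero])
      fun _ _ _ ↦ Commute.all _ _⟩

theorem letterParity_simple (hM : IsEvenCoxeterMatrix M) (cs : CoxeterSystem M W) (i : B) :
    hM.letterParity cs (cs.simple i) = ofAdd (Finsupp.single i 1) :=
  cs.lift_apply_simple _ i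

/-- The isomorphism `π_S` from finite subsets of `B` onto the abelianization of `W`. -/
noncomputable def abelianizationEquiv (hM : IsEvenCoxeterMatrix M) (cs : CoxeterSystem M W) :
    Multiplicative (B →₀ ZMod 2) ≃* Abelianization W :=
  MonoidHom.toMulEquiv
    (AddMonoidHom.toMultiplicativeLeft <|
      finsuppZModLift (fun i ↦ Additive.ofMul (Abelianization.of (cs.simple i)))
        fun i ↦ by rw [← ofMul_pow, ← map_pow, cs.simple_sq, map_one, ofMul_one])
    (Abelianization.lift (hM.letterParity cs))
    (AddMonoidHom.toMultiplicative.symm.injective <| addMonoidHom_finsupp_zmod_ext fun i ↦ by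
      simp [finsuppZModLift_single_one, letterParity_simple])
    (Abelianization.hom_ext _ _ <| cs.ext_simple fun i ↦ by
      simp [finsuppZModLift_single_one, letterParity_simple])

theorem abelianizationEquiv_letterParity (hM : IsEvenCoxeterMatrix M) (cs : CoxeterSystem M W)
    (w : W) : hM.abelianizationEquiv cs (hM.letterParity cs w) = Abelianization.of w :=
  (hM.abelianizationEquiv cs).apply_symm_apply (Abelianization.of w)

theorem exists_isOfFinOrder_letterParity_eq (hM : IsEvenCoxeterMatrix M) (cs : CoxeterSystem M W)
    (v : Multiplicative (B →₀ ZMod 2))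
    (hv : ∀ x ∈ v.toAdd.support, ∀ y ∈ v.toAdd.support, Commute (cs.simple x) (cs.simple y)) :
    ∃ w : W, IsOfFinOrder w ∧ hM.letterParity cs w = v := by
  have comm : (v.toAdd.support : Set B).Pairwise (Function.onFun Commute cs.simple) :=
    fun x hx y hy _ ↦ hv x hx y hy
  refine ⟨v.toAdd.support.noncommProd cs.simple comm, isOfFinOrder_noncommProd _ _ _ fun x _ ↦
    isOfFinOrder_iff_pow_eq_one.mpr ⟨2, two_pos, cs.simple_sq x⟩, ?_⟩
  rw [Finset.map_noncommProd, Finset.noncommProd_eq_prod]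
  simp only [letterParity_simple]
  rw [← ofAdd_sum, sum_support_single_one, ofAdd_toAdd]

open Classical in
/-- The images of the generators under the retraction of `W` onto the infinite dihedral group
generated by `s` and `t`. -/
noncomputable def dihedralGenerator (s t i : B) : DihedralGroup 0 :=
  if i = s then .sr 0 else if i = t then .sr 1 else 1

theorem isLiftable_dihedralGenerator (hM : IsEvenCoxeterMatrix M) {s t : B} (hst : M s t = 0) :
    M.IsLiftable (dihedralGenerator s t) := by
  have hts : M t s = 0 := M.symmetric t s ▸ hst
  refine hM.isLiftable (fun i ↦ ?_) fun i j hij ↦ ?_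
  · unfold dihedralGenerator
    split_ifs <;> simp [pow_two]
  · unfold dihedralGenerator
    split_ifs <;> simp_all

/-- The retraction of `W` onto the infinite dihedral group generated by `s` and `t`. -/
noncomputable def dihedralRetraction (hM : IsEvenCoxeterMatrix M) (cs : CoxeterSystem M W)
    {s t : B} (hst : M s t = 0) : W →* DihedralGroup 0 :=
  cs.lift ⟨dihedralGenerator s t, hM.isLiftable_dihedralGenerator hst⟩

theorem dihedralParity_dihedralRetraction (hM : IsEvenCoxeterMatrix M) (cs : CoxeterSystem M W)
    {s t : B} (hst : M s t = 0) (w : W) :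
    dihedralParity (dvd_zero 2) (hM.dihedralRetraction cs hst w) =
      ofAdd ((hM.letterParity cs w).toAdd s, (hM.letterParity cs w).toAdd t) := by
  have hne : s ≠ t := by rintro rfl; simp at hst
  let coords : (B →₀ ZMod 2) →+ ZMod 2 × ZMod 2 :=
    (Finsupp.applyAddHom s).prod (Finsupp.applyAddHom t)
  suffices (dihedralParity (dvd_zero 2)).comp (hM.dihedralRetraction cs hst) =
      coords.toMultiplicative.comp (hM.letterParity cs) from DFunLike.congr_fun this w
  refine cs.ext_simple fun i ↦ ?_
  simp only [MonoidHom.comp_apply, letterParity_simple, dihedralRetraction, cs.lift_apply_simple,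
    dihedralGenerator]
  split_ifs with his hit
  · subst his; simp [coords, dihedralParity_sr, hne]
  · subst hit; simp [coords, dihedralParity_sr, hne, CharTwo.add_self_eq_zero]
  · simp [coords, his, hit, ← Prod.zero_eq_mk]

theorem ne_zero_of_mem_support_letterParity (hM : IsEvenCoxeterMatrix M) (cs : CoxeterSystem M W)
    {w : W} (hw : IsOfFinOrder w) {s t : B} (hs : s ∈ (hM.letterParity cs w).toAdd.support)
    (ht : t ∈ (hM.letterParity cs w).toAdd.support) : M s t ≠ 0 := by
  intro hst
  apply dihedralParity_ne_of_isOfFinOrder ((hM.dihedralRetraction cs hst).isOfFinOrder hw)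
  have hs_odd : (hM.letterParity cs w).toAdd s = 1 :=
    Fin.eq_one_of_ne_zero _ (Finsupp.mem_support_iff.mp hs)
  have ht_odd : (hM.letterParity cs w).toAdd t = 1 :=
    Fin.eq_one_of_ne_zero _ (Finsupp.mem_support_iff.mp ht)
  rw [dihedralParity_dihedralRetraction, hs_odd, ht_odd]

end IsEvenCoxeterMatrix

theorem commute_simple_of_eq_two {B W : Type*} [Group W] {M : CoxeterMatrix B}
    (cs : CoxeterSystem M W) {s t : B} (h : M s t = 2) :
    Commute (cs.simple s) (cs.simple t) := by
  have hpow := cs.simple_mul_simple_pow s t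
  rwa [h, pow_two, mul_eq_one_iff_eq_inv, mul_inv_rev, cs.inv_simple, cs.inv_simple] at hpow

theorem stmt_17 {B : Type*} {W : Type*} [Group W] (M : CoxeterMatrix B)
    (cs : CoxeterSystem M W)
    (hra : ∀ s t : B, s ≠ t → M s t = 2 ∨ M s t = 0) :
    ∃ π : Multiplicative (B →₀ ZMod 2) ≃* Abelianization W,
      (∀ s : B, π (Multiplicative.ofAdd (Finsupp.single s 1)) =
        Abelianization.of (cs.simple s)) ∧
      ⇑π '' {v : Multiplicative (B →₀ ZMod 2) |
          ∀ x ∈ (Multiplicative.toAdd v).support, ∀ y ∈ (Multiplicative.toAdd v).support,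
            Commute (cs.simple x) (cs.simple y)} =
        Abelianization.of '' {w : W | IsOfFinOrder w} := by
  have hM : IsEvenCoxeterMatrix M := fun s t hst ↦ by rcases hra s t hst with h | h <;> simp [h]
  refine ⟨hM.abelianizationEquiv cs, fun s ↦ ?_, Set.Subset.antisymm ?_ ?_⟩
  · rw [← hM.letterParity_simple cs, hM.abelianizationEquiv_letterParity]
  · rintro _ ⟨v, hv, rfl⟩
    obtain ⟨w, hw, rfl⟩ := hM.exists_isOfFinOrder_letterParity_eq cs v hv
    exact ⟨w, hw, (hM.abelianizationEquiv_letterParity cs w).symm⟩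
  · rintro _ ⟨w, hw, rfl⟩
    refine ⟨hM.letterParity cs w, fun s hs t ht ↦ ?_, hM.abelianizationEquiv_letterParity cs w⟩
    obtain rfl | hst := eq_or_ne s t
    · exact Commute.refl _
    · exact commute_simple_of_eq_two cs <|
        (hra s t hst).resolve_right (hM.ne_zero_of_mem_support_letterParity cs hw hs ht)
end

section
/- Let (S,R_Γ) be the commutation relation of a right-angled Coxeter matrix Γ. If C²({s}) = {s} for every s ∈ S, then every 𝔽₂-linear automorphism of [S] stabilizing [S]_c permutes the singletons of S, and hence is induced by an automorphism of Γ. Conversely, if some cell C²({s}) contains an element t ≠ s, then the linear map α_{s,t} fixing {x} for x ≠ s and sending {s} to {s,t} is an automorphism of [S] stabilizing [S]_c which does not preserve cardinality; hence Aut([S],[S]_c) = Aut(Γ) if and only if all cells are singletons. -/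
/-- The commutant of a subset `X` with respect to a binary relation `R`. -/
def Cop {E : Type*} (R : E → E → Prop) (X : Set E) : Set E := {y | ∀ x ∈ X, R y x}

/-- `[S]_c` : the set of elements of `[S] = S →₀ ZMod 2` whose support is commutative. -/
def commc {S : Type*} (R : S → S → Prop) : Set (S →₀ ZMod 2) :=
  {v | ∀ x ∈ v.support, ∀ y ∈ v.support, R x y}

/-!
For commutative `u` and `v`, the sum `u + v` is commutative iff every element of `u` commutes with
every element of `v`; hence a linear isomorphism `φ` respecting commutative subsets respects
commutation between them. If `x ∈ φ {s}` and `t` commutes with `s`, then `φ {t}` commutes with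
`φ {s}`, hence with `{x}`, so `t` commutes with `φ⁻¹ {x}`. Thus `φ⁻¹ {x} ⊆ C²({s})`, and when this
cell is a singleton, `φ {s} = {x}`.

If the cell of `s` contains `t ≠ s`, everything commuting with `s` commutes with `t`, so the
transvection `{s} ↦ {s, t}` respects commutative subsets but not cardinality.
-/

open Finsupp

section Commutant

variable {E : Type*} {R : E → E → Prop}

theorem subset_Cop_Cop [Std.Symm R] (X : Set E) : X ⊆ Cop R (Cop R X) :=
  fun x hx _ hy ↦ symm_of R (hy x hx)

theorem mem_Cop_Cop_singleton_iff {s t : E} :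
    t ∈ Cop R (Cop R {s}) ↔ ∀ x, R x s → R t x := by
  simp [Cop]

end Commutant

section FreeModule

variable {S T : Type*}

theorem eq_single_one_of_support_subset {u : S →₀ ZMod 2} {s : S} (hu : u ≠ 0)
    (hsub : u.support ⊆ {s}) : u = single s 1 := by
  obtain ⟨c, rfl⟩ := support_subset_singleton'.1 hsub
  obtain rfl : c = 1 := Fin.eq_one_of_ne_zero c (single_ne_zero.1 hu)
  rfl

theorem bijective_of_forall_apply_single {K : Type*} [Semiring K] [Nontrivial K]
    (φ : (S →₀ K) ≃ₗ[K] (T →₀ K)) {f : S → T} (hf : ∀ s, φ (single s 1) = single (f s) 1) :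
    Function.Bijective f := by
  have hφ : (φ : (S →₀ K) →ₗ[K] (T →₀ K)) = lmapDomain K K f := by
    ext1 s
    ext1
    simp [hf]
  refine ⟨fun s t hst ↦ single_left_injective one_ne_zero (φ.injective ?_), fun x ↦ ?_⟩
  · rw [hf, hf, hst]
  · obtain ⟨v, hv⟩ := φ.surjective (single x 1)
    refine mem_range_of_mapDomain_ne_zero (x := v) ?_
    have hx : mapDomain f v = single x 1 := (LinearMap.congr_fun hφ v).symm.trans hv
    simp [hx]

end FreeModule

section CommutativeSubsets

variable {S : Type*} {R : S → S → Prop} {u v : S →₀ ZMod 2}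

theorem single_mem_commc_iff {s : S} : single s 1 ∈ commc R ↔ R s s := by
  rw [commc, Set.mem_ofPred_eq, support_single _ one_ne_zero]
  simp

theorem rel_of_add_mem_commc (hu : u ∈ commc R) (hv : v ∈ commc R) (huv : u + v ∈ commc R)
    {x y : S} (hx : x ∈ u.support) (hy : y ∈ v.support) : R x y := by
  rw [mem_support_iff] at hx hy
  by_cases hvx : v x = 0
  · by_cases huy : u y = 0
    · exact huv x (by simp [hvx, hx]) y (by simp [huy, hy])
    · exact hu x (by simpa using hx) y (by simpa using huy)
  · exact hv x (by simpa using hvx) y (by simpa using hy)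

theorem add_mem_commc [Std.Symm R] (hu : u ∈ commc R) (hv : v ∈ commc R)
    (huv : ∀ x ∈ u.support, ∀ y ∈ v.support, R x y) : u + v ∈ commc R := by
  classical
  have mem_or_mem {x : S} (hx : x ∈ (u + v).support) : x ∈ u.support ∨ x ∈ v.support :=
    Finset.mem_union.1 (support_add hx)
  intro x hx y hy
  rcases mem_or_mem hx with hxu | hxv <;> rcases mem_or_mem hy with hyu | hyv
  · exact hu x hxu y hyu
  · exact huv x hxu y hyv
  · exact symm_of R (huv y hyu x hxv)
  · exact hv x hxv y hyv

theorem add_mem_commc_iff [Std.Symm R] (hu : u ∈ commc R) (hv : v ∈ commc R) :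
    u + v ∈ commc R ↔ ∀ x ∈ u.support, ∀ y ∈ v.support, R x y :=
  ⟨fun huv _ hx _ hy ↦ rel_of_add_mem_commc hu hv huv hx hy, add_mem_commc hu hv⟩

end CommutativeSubsets

section Isomorphism

variable {S T : Type*} {R : S → S → Prop} {Q : T → T → Prop} [Std.Symm R] [Std.Symm Q]
  {φ : (S →₀ ZMod 2) ≃ₗ[ZMod 2] (T →₀ ZMod 2)}

theorem forall_support_map_rel_iff (hφ : ∀ v, φ v ∈ commc Q ↔ v ∈ commc R) {u v : S →₀ ZMod 2}
    (hu : u ∈ commc R) (hv : v ∈ commc R) :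
    (∀ x ∈ (φ u).support, ∀ y ∈ (φ v).support, Q x y) ↔
      ∀ x ∈ u.support, ∀ y ∈ v.support, R x y := by
  rw [← add_mem_commc_iff ((hφ u).2 hu) ((hφ v).2 hv), ← map_add, hφ, add_mem_commc_iff hu hv]

variable [Std.Refl R]

theorem support_symm_single_subset_Cop_Cop (hφ : ∀ v, φ v ∈ commc Q ↔ v ∈ commc R) {s : S} {x : T}
    (hx : x ∈ (φ (single s 1)).support) :
    ((φ.symm (single x 1)).support : Set S) ⊆ Cop R (Cop R {s}) := by
  intro y hy
  refine mem_Cop_Cop_singleton_iff.2 fun t hts ↦ ?_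
  have single_mem (r : S) : single r 1 ∈ commc R := single_mem_commc_iff.2 (refl_of R r)
  have hQx : Q x x := (hφ _).2 (single_mem s) x hx x hx
  have symm_mem : φ.symm (single x 1) ∈ commc R := by
    rwa [← hφ, φ.apply_symm_apply, single_mem_commc_iff]
  have rel_map : ∀ p ∈ (φ (single s 1)).support, ∀ q ∈ (φ (single t 1)).support, Q p q :=
    (forall_support_map_rel_iff hφ (single_mem s) (single_mem t)).2 <| by
      simpa using symm_of R hts
  refine (forall_support_map_rel_iff hφ symm_mem (single_mem t)).1 ?_ y hy t (by simp)
  simpa using rel_map x hx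

theorem exists_apply_single_eq_single (hφ : ∀ v, φ v ∈ commc Q ↔ v ∈ commc R) {s : S}
    (hs : Cop R (Cop R {s}) = {s}) : ∃ x, φ (single s 1) = single x 1 := by
  obtain ⟨x, hx⟩ : (φ (single s 1)).support.Nonempty := by simp
  have hsub : (φ.symm (single x 1)).support ⊆ {s} := by
    exact_mod_cast hs ▸ support_symm_single_subset_Cop_Cop hφ hx
  have symm_single : φ.symm (single x 1) = single s 1 :=
    eq_single_one_of_support_subset (by simp) hsub
  exact ⟨x, by rw [← symm_single, φ.apply_symm_apply]⟩

theorem exists_relIso_apply_single (hφ : ∀ v, φ v ∈ commc Q ↔ v ∈ commc R)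
    (hcell : ∀ s, Cop R (Cop R {s}) = {s}) :
    ∃ σ : R ≃r Q, ∀ s, φ (single s 1) = single (σ s) 1 := by
  choose f hf using fun s ↦ exists_apply_single_eq_single hφ (hcell s)
  have rel_iff (s t : S) : Q (f s) (f t) ↔ R s t := by
    simpa [hf] using forall_support_map_rel_iff hφ
      (single_mem_commc_iff.2 (refl_of R s)) (single_mem_commc_iff.2 (refl_of R t))
  exact ⟨⟨.ofBijective f (bijective_of_forall_apply_single φ hf), rel_iff _ _⟩, hf⟩

end Isomorphism

section Transvection

variable {S : Type*} {s t : S}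

/-- The automorphism `α_{s,t}` of `[S]` sending `{s}` to `{s, t}` and fixing the other singletons,
written as the transvection `v ↦ v + v s • {t}`. -/
noncomputable def singleTransvection (hst : s ≠ t) : (S →₀ ZMod 2) ≃ₗ[ZMod 2] (S →₀ ZMod 2) :=
  LinearEquiv.transvection (f := lapply s) (v := single t 1)
    (by rw [lapply_apply, single_eq_of_ne hst])

theorem singleTransvection_apply (hst : s ≠ t) (v : S →₀ ZMod 2) :
    singleTransvection hst v = v + single t (v s) := by
  rw [singleTransvection, LinearEquiv.transvection.apply, lapply_apply, smul_single, smul_eq_mul,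
    mul_one]

theorem singleTransvection_involutive (hst : s ≠ t) :
    Function.Involutive (singleTransvection hst) := by
  intro v
  have coeff_s : (v + single t (v s)) s = v s := by simp [single_eq_of_ne hst]
  rw [singleTransvection_apply, singleTransvection_apply, coeff_s, add_assoc, ← single_add,
    CharTwo.add_self_eq_zero, single_zero, add_zero]

theorem singleTransvection_mem_commc {R : S → S → Prop} [Std.Symm R] [Std.Refl R] (hst : s ≠ t)
    (ht : t ∈ Cop R (Cop R {s})) {v : S →₀ ZMod 2} (hv : v ∈ commc R) :
    singleTransvection hst v ∈ commc R := by
  rw [singleTransvection_apply]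
  by_cases hs : v s = 0
  · simpa [hs] using hv
  · have hs_one : v s = 1 := Fin.eq_one_of_ne_zero _ hs
    rw [hs_one]
    refine add_mem_commc hv (single_mem_commc_iff.2 (refl_of R t)) fun x hx ↦ ?_
    have hxs : R x s := hv x hx s (mem_support_iff.2 hs)
    simpa using symm_of R (mem_Cop_Cop_singleton_iff.1 ht x hxs)

theorem image_singleTransvection_commc {R : S → S → Prop} [Std.Symm R] [Std.Refl R] (hst : s ≠ t)
    (ht : t ∈ Cop R (Cop R {s})) : singleTransvection hst '' commc R = commc R :=
  (Set.image_subset_iff.2 fun _ ↦ singleTransvection_mem_commc hst ht).antisymm fun v hv ↦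
    ⟨_, singleTransvection_mem_commc hst ht hv, singleTransvection_involutive hst v⟩

theorem card_support_singleTransvection_single (hst : s ≠ t) :
    (singleTransvection hst (single s 1)).support.card = 2 := by
  classical
  rw [singleTransvection_apply, single_eq_same,
    support_single_add_single hst one_ne_zero one_ne_zero, Finset.card_pair hst]

end Transvection

theorem stmt_18 {S : Type*} (R : S → S → Prop) (hsymm : Symmetric R) (hrefl : Reflexive R) :
    (∀ φ : (S →₀ ZMod 2) ≃ₗ[ZMod 2] (S →₀ ZMod 2), ⇑φ '' commc R = commc R →
      ∃ σ : Equiv.Perm S, (∀ x y : S, R x y ↔ R (σ x) (σ y)) ∧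
        ∀ s : S, φ (Finsupp.single s 1) = Finsupp.single (σ s) 1) ↔
    (∀ s : S, Cop R (Cop R {s}) = {s}) := by
  have : Std.Symm R := ⟨hsymm⟩
  have : Std.Refl R := ⟨hrefl⟩
  constructor
  · intro hperm s
    refine (subset_Cop_Cop {s}).antisymm' fun t ht ↦ ?_
    by_contra hts
    have hst : s ≠ t := Ne.symm hts
    obtain ⟨σ, -, hσ⟩ := hperm (singleTransvection hst) (image_singleTransvection_commc hst ht)
    have hcard := card_support_singleTransvection_single hst
    simp [hσ] at hcard
  · intro hcell φ hφ
    have map_mem_iff (v : S →₀ ZMod 2) : φ v ∈ commc R ↔ v ∈ commc R :=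
      (Set.ext_iff.1 hφ (φ v)).symm.trans φ.injective.mem_set_image
    obtain ⟨σ, hσ⟩ := exists_relIso_apply_single map_mem_iff hcell
    exact ⟨σ.toEquiv, fun _ _ ↦ σ.map_rel_iff.symm, hσ⟩
end
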